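/- Equivalent-points lower bound on classification loss: Let ι be a finite index set, α any type, x : ι → α the feature vectors and y : ι → Bool the labels of a dataset. Then for every classifier f : α → Bool, the number of misclassified observations, #{ i ∈ ι : f(x i) ≠ y i }, is at least Σ over distinct feature values v in the image of x of min( #{ i : x i = v and y i = true }, #{ i : x i = v and y i = false } ), i.e. the total number of minority-labeled points within the equivalence classes of identical feature vectors. -/

import Mathlib

section Classification

variable {ι α β : Type*} [DecidableEq β]

/-- The number of points of `s` that do not carry a most frequent label of `s`, encoded as the least
number of errors that a constant prediction makes on `s`. It is the contribution of one class of
equivalent points to the lower bound. For an empty label type the infimum is the junk value `0`. -/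
noncomputable def minorityCount (s : Finset ι) (y : ι → β) : ℕ :=
  ⨅ b, (s.filter fun i => y i ≠ b).card

theorem minorityCount_le (s : Finset ι) (y : ι → β) (b : β) :
    minorityCount s y ≤ (s.filter fun i => y i ≠ b).card :=
  ciInf_le (OrderBot.bddBelow _) b

theorem minorityCount_bool (s : Finset ι) (y : ι → Bool) :
    minorityCount s y =
      min (s.filter fun i => y i = true).card (s.filter fun i => y i = false).card := by
  apply le_antisymm
  · exact le_min (by simpa using minorityCount_le s y false)
      (by simpa using minorityCount_le s y true)
  · exact le_ciInf fun b => by cases b <;> simp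

variable [DecidableEq α]

theorem card_misclassified_eq_sum_fibers (s : Finset ι) (x : ι → α) (y : ι → β) (f : α → β) :
    (s.filter fun i => f (x i) ≠ y i).card =
      ∑ v ∈ s.image x, ((s.filter fun i => x i = v).filter fun i => y i ≠ f v).card := by
  have maps_to_image : ∀ i ∈ s.filter fun i => f (x i) ≠ y i, x i ∈ s.image x := fun i hi =>
    Finset.mem_image_of_mem x (Finset.mem_of_mem_filter i hi)
  rw [Finset.card_eq_sum_card_fiberwise maps_to_image]
  refine Finset.sum_congr rfl fun v _ => congrArg Finset.card ?_
  rw [Finset.filter_comm]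
  refine Finset.filter_congr fun i hi => ?_
  rw [(Finset.mem_filter.mp hi).2, ne_comm]

theorem equivalent_points_lower_bound_general (s : Finset ι) (x : ι → α) (y : ι → β)
    (f : α → β) :
    ∑ v ∈ s.image x, minorityCount (s.filter fun i => x i = v) y ≤
      (s.filter fun i => f (x i) ≠ y i).card := by
  rw [card_misclassified_eq_sum_fibers]
  exact Finset.sum_le_sum fun v _ => minorityCount_le _ y (f v)

end Classification

/-- Equivalent-points lower bound on classification loss: any classifier must
misclassify at least the minority-labeled points within each equivalence class
of identical feature vectors. -/
theorem equivalent_points_lower_bound {ι α : Type*} [Fintype ι] [DecidableEq α]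
    (x : ι → α) (y : ι → Bool) (f : α → Bool) :
    ∑ v ∈ Finset.univ.image x,
        min ((Finset.univ.filter fun i => x i = v ∧ y i = true).card)
            ((Finset.univ.filter fun i => x i = v ∧ y i = false).card)
      ≤ (Finset.univ.filter fun i => f (x i) ≠ y i).card := by
  simpa only [minorityCount_bool, Finset.filter_filter] using
    equivalent_points_lower_bound_general Finset.univ x y f
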